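/- Fix points w_t, v_k ∈ ℝ^d and a vector b_t ∈ ℝ^d, and let g_t = ∇f(w_t) − ∇f(v_k) + ∇F(v_k) + b_t where f ∼ D. Then E[‖g_t‖²] ≤ 8L (F(w_t) − F(w*)) + 8L (F(v_k) − F(w*)) + 2‖b_t‖². -/

import Mathlib

open MeasureTheory


lemma aux_line {d : ℕ} (f : EuclideanSpace ℝ (Fin d) → ℝ)
    (gr : EuclideanSpace ℝ (Fin d) → EuclideanSpace ℝ (Fin d))
    (hgrad : ∀ x, HasGradientAt f (gr x) x) (x u : EuclideanSpace ℝ (Fin d)) (t : ℝ) :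
    HasDerivAt (fun s : ℝ => f (x + s • u)) (inner ℝ (gr (x + t • u)) u) t := by
  have h1 := (hgrad (x + t • u)).hasFDerivAt
  have h2 : HasDerivAt (fun s : ℝ => x + s • u) u t := by
    simpa using ((hasDerivAt_id t).smul_const u).const_add x
  have h3 := h1.comp_hasDerivAt t h2
  simp only [InnerProductSpace.toDual_apply_apply] at h3
  exact h3

lemma aux_descent {d : ℕ} (f : EuclideanSpace ℝ (Fin d) → ℝ) (L : ℝ)
    (gr : EuclideanSpace ℝ (Fin d) → EuclideanSpace ℝ (Fin d))
    (hgrad : ∀ x, HasGradientAt f (gr x) x)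
    (hlip : ∀ u v, ‖gr u - gr v‖ ≤ L * ‖u - v‖) (x u : EuclideanSpace ℝ (Fin d)) :
    f (x + u) ≤ f x + inner ℝ (gr x) u + L / 2 * ‖u‖ ^ 2 := by
  have hd : ∀ t : ℝ, HasDerivAt
      (fun s : ℝ => f (x + s • u) - s * inner ℝ (gr x) u - L / 2 * ‖u‖ ^ 2 * s ^ 2)
      (inner ℝ (gr (x + t • u)) u - inner ℝ (gr x) u - L / 2 * ‖u‖ ^ 2 * (2 * t)) t := by
    intro t
    have h1 := aux_line f gr hgrad x u t
    have h2 := (hasDerivAt_id t).mul_const (inner ℝ (gr x) u)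
    have h3 := ((hasDerivAt_id t).pow 2).const_mul (L / 2 * ‖u‖ ^ 2)
    have h4 := (h1.sub h2).sub h3
    refine HasDerivAt.congr_deriv (f := fun s : ℝ => f (x + s • u) - s * inner ℝ (gr x) u - L / 2 * ‖u‖ ^ 2 * s ^ 2) h4 ?_
    simp
  have ha := antitoneOn_of_deriv_nonpos (convex_Icc (0 : ℝ) 1)
    (fun t _ => (hd t).continuousAt.continuousWithinAt)
    (fun t _ => (hd t).differentiableAt.differentiableWithinAt)
    (by
      intro t ht
      rw [interior_Icc] at ht
      rw [(hd t).deriv, ← inner_sub_left]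
      have h1 := real_inner_le_norm (gr (x + t • u) - gr x) u
      have h2 := hlip (x + t • u) x
      rw [add_sub_cancel_left, norm_smul, Real.norm_of_nonneg ht.1.le] at h2
      have h3 := mul_le_mul_of_nonneg_right h2 (norm_nonneg u)
      nlinarith)
  have := ha (Set.left_mem_Icc.2 zero_le_one) (Set.right_mem_Icc.2 zero_le_one) zero_le_one
  simp at this
  linarith

lemma aux_convex {d : ℕ} (f : EuclideanSpace ℝ (Fin d) → ℝ)
    (gr : EuclideanSpace ℝ (Fin d) → EuclideanSpace ℝ (Fin d))
    (hconv : ConvexOn ℝ Set.univ f)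
    (hgrad : ∀ x, HasGradientAt f (gr x) x) (x u : EuclideanSpace ℝ (Fin d)) :
    f x + inner ℝ (gr x) u ≤ f (x + u) := by
  have hc : ConvexOn ℝ Set.univ (fun s : ℝ => f (x + s • u)) := by
    refine ⟨convex_univ, fun a _ b _ p q hp hq hpq => ?_⟩
    have := hconv.2 (Set.mem_univ (x + a • u)) (Set.mem_univ (x + b • u)) hp hq hpq
    have e : x + (p • a + q • b) • u = p • (x + a • u) + q • (x + b • u) := by
      have : x = (p + q) • x := by rw [hpq, one_smul]
      nth_rewrite 1 [this]
      simp only [smul_eq_mul]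
      module
    simpa only [e] using this
  have h := hc.le_slope_of_hasDerivAt (Set.mem_univ 0) (Set.mem_univ 1) zero_lt_one
    (aux_line f gr hgrad x u 0)
  simp [slope_def_field] at h
  linarith

lemma aux_coco {d : ℕ} (f : EuclideanSpace ℝ (Fin d) → ℝ) (L : ℝ) (hL : 0 ≤ L)
    (gr : EuclideanSpace ℝ (Fin d) → EuclideanSpace ℝ (Fin d))
    (hconv : ConvexOn ℝ Set.univ f)
    (hgrad : ∀ x, HasGradientAt f (gr x) x)
    (hlip : ∀ u v, ‖gr u - gr v‖ ≤ L * ‖u - v‖) (x y : EuclideanSpace ℝ (Fin d)) :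
    ‖gr x - gr y‖ ^ 2 ≤ 2 * L * (f x - f y - inner ℝ (gr y) (x - y)) := by
  rcases hL.eq_or_lt with rfl | hL
  · have h := hlip x y
    have h0 : ‖gr x - gr y‖ = 0 := le_antisymm (by simpa using h) (norm_nonneg _)
    simp [h0]
  · set G := gr x - gr y with hG
    have h1 := aux_descent f L gr hgrad hlip x (-(1 / L) • G)
    have h2 := aux_convex f gr hconv hgrad y (x - y + -(1 / L) • G)
    have e : y + (x - y + -(1 / L) • G) = x + -(1 / L) • G := by abel
    rw [e, inner_add_right] at h2
    have h3 : inner ℝ (gr x) (-(1 / L) • G) - inner ℝ (gr y) (-(1 / L) • G)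
        = -(1 / L) * ‖G‖ ^ 2 := by
      rw [← inner_sub_left, inner_smul_right, ← hG, real_inner_self_eq_norm_sq]
    have h4 : L / 2 * ‖-(1 / L) • G‖ ^ 2 = 1 / (2 * L) * ‖G‖ ^ 2 := by
      rw [norm_smul, mul_pow, Real.norm_eq_abs, sq_abs]
      field_simp
    have h5 : 1 / (2 * L) * ‖G‖ ^ 2 ≤ f x - f y - inner ℝ (gr y) (x - y) := by
      have : 1 / L = 2 * (1 / (2 * L)) := by field_simp
      have h6 : -(1 / L) * ‖G‖ ^ 2 = -2 * (1 / (2 * L) * ‖G‖ ^ 2) := by rw [this]; ring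
      linarith
    calc ‖G‖ ^ 2 = 2 * L * (1 / (2 * L) * ‖G‖ ^ 2) := by field_simp
      _ ≤ _ := mul_le_mul_of_nonneg_left h5 (by positivity)

/-- Fix points `w_t, v_k ∈ ℝ^d` and a vector `b_t ∈ ℝ^d`, and let
`g_t = ∇f(w_t) − ∇f(v_k) + ∇F(v_k) + b_t` where `f ∼ D`, `D` a distribution over convex
`L`-smooth functions, `F = E_{f∼D}[f]`, and `w*` a global minimizer of `F`. Then
`E[‖g_t‖²] ≤ 8L (F(w_t) − F(w*)) + 8L (F(v_k) − F(w*)) + 2‖b_t‖²`. -/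
theorem variance_reduced_grad_sq_le {d : ℕ} {Ω : Type*} [MeasurableSpace Ω]
    (μ : Measure Ω) [IsProbabilityMeasure μ]
    (L : ℝ) (hL : 0 ≤ L)
    (f : Ω → EuclideanSpace ℝ (Fin d) → ℝ)
    (gradf : Ω → EuclideanSpace ℝ (Fin d) → EuclideanSpace ℝ (Fin d))
    (hconv : ∀ ω, ConvexOn ℝ Set.univ (f ω))
    (hgrad : ∀ ω x, HasGradientAt (f ω) (gradf ω x) x)
    (hlip : ∀ ω, ∀ u v : EuclideanSpace ℝ (Fin d), ‖gradf ω u - gradf ω v‖ ≤ L * ‖u - v‖)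
    (F : EuclideanSpace ℝ (Fin d) → ℝ)
    (hF : ∀ x, F x = ∫ ω, f ω x ∂μ)
    (gradF : EuclideanSpace ℝ (Fin d) → EuclideanSpace ℝ (Fin d))
    (hgradF : ∀ x, gradF x = ∫ ω, gradf ω x ∂μ)
    (hfint : ∀ x, Integrable (fun ω => f ω x) μ)
    (hgradint : ∀ x, Integrable (fun ω => gradf ω x) μ)
    (wstar : EuclideanSpace ℝ (Fin d))
    (hmin : ∀ u, F wstar ≤ F u)
    (wt vk bt : EuclideanSpace ℝ (Fin d))
    (g : Ω → EuclideanSpace ℝ (Fin d))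
    (hg : ∀ ω, g ω = gradf ω wt - gradf ω vk + gradF vk + bt)
    (hint : Integrable (fun ω => ‖g ω‖ ^ 2) μ) :
    (∫ ω, ‖g ω‖ ^ 2 ∂μ)
      ≤ 8 * L * (F wt - F wstar) + 8 * L * (F vk - F wstar) + 2 * ‖bt‖ ^ 2 := by
  have hin : ∀ x u, Integrable (fun ω => inner ℝ (gradf ω x) u) μ :=
    fun x u => (hgradint x).inner_const u
  have hinE : ∀ x u, ∫ ω, inner ℝ (gradf ω x) u ∂μ = inner ℝ (gradF x) u := by
    intro x u
    rw [hgradF]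
    simp only [real_inner_comm u]
    exact integral_inner (hgradint x) u
  have hdesc : ∀ x u, F (x + u) ≤ F x + inner ℝ (gradF x) u + L / 2 * ‖u‖ ^ 2 := by
    intro x u
    have h1 : Integrable (fun ω => f ω x + inner ℝ (gradf ω x) u) μ := (hfint x).add (hin x u)
    have h := integral_mono (μ := μ) (hfint (x + u))
      (h1.add (integrable_const (L / 2 * ‖u‖ ^ 2)))
      (fun ω => aux_descent (f ω) L (gradf ω) (hgrad ω) (hlip ω) x u)
    simp only [Pi.add_apply] at h
    rw [integral_add h1 (integrable_const _), integral_add (hfint x) (hin x u), hinE,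
      ← hF, ← hF] at h
    simpa using h
  have hz : gradF wstar = 0 := by
    have h := hdesc wstar (-(1 / (L + 1)) • gradF wstar)
    have h' := hmin (wstar + -(1 / (L + 1)) • gradF wstar)
    rw [inner_smul_right, real_inner_self_eq_norm_sq, norm_smul, mul_pow, Real.norm_eq_abs,
      sq_abs] at h
    set s := 1 / (L + 1) with hs
    have hs0 : 0 < s := by positivity
    have hs1 : s * (L + 1) = 1 := by rw [hs]; field_simp
    have h2 : 0 ≤ s * (-1 + L / 2 * s) * ‖gradF wstar‖ ^ 2 := by nlinarith
    have h3 : s * (-1 + L / 2 * s) < 0 := by nlinarith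
    have h4 : ‖gradF wstar‖ ^ 2 ≤ 0 := by
      by_contra hc
      push Not at hc
      nlinarith [mul_neg_of_neg_of_pos h3 hc]
    have h5 : ‖gradF wstar‖ = 0 := by
      have := sq_nonneg ‖gradF wstar‖
      exact pow_eq_zero_iff (two_ne_zero) |>.1 (le_antisymm h4 this)
    exact norm_eq_zero.1 h5
  have hB : ∀ x, Integrable
      (fun ω => f ω x - f ω wstar - inner ℝ (gradf ω wstar) (x - wstar)) μ :=
    fun x => ((hfint x).sub (hfint wstar)).sub (hin _ _)
  have hBE : ∀ x, ∫ ω, (f ω x - f ω wstar - inner ℝ (gradf ω wstar) (x - wstar)) ∂μ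
      = F x - F wstar := by
    intro x
    have h1 : Integrable (fun ω => f ω x - f ω wstar) μ := (hfint x).sub (hfint wstar)
    rw [integral_sub h1 (hin _ _),
      integral_sub (hfint x) (hfint wstar), hinE, hz, hF x, hF wstar]
    simp
  set G := gradF vk with hGdef
  have hC : Integrable (fun ω => inner ℝ (gradf ω vk) G - inner ℝ (gradf ω wstar) G) μ :=
    (hin _ _).sub (hin _ _)
  have hCE : ∫ ω, (inner ℝ (gradf ω vk) G - inner ℝ (gradf ω wstar) G) ∂μ = ‖G‖ ^ 2 := by
    rw [integral_sub (hin _ _) (hin _ _), hinE, hinE, hz, ← hGdef, real_inner_self_eq_norm_sq]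
    simp
  have hpt : ∀ ω, ‖g ω‖ ^ 2 ≤
      8 * L * (f ω wt - f ω wstar - inner ℝ (gradf ω wstar) (wt - wstar))
      + 8 * L * (f ω vk - f ω wstar - inner ℝ (gradf ω wstar) (vk - wstar))
      + (-8) * (inner ℝ (gradf ω vk) G - inner ℝ (gradf ω wstar) G)
      + (4 * ‖G‖ ^ 2 + 2 * ‖bt‖ ^ 2) := by
    intro ω
    have ha := aux_coco (f ω) L hL (gradf ω) (hconv ω) (hgrad ω) (hlip ω) wt wstar
    have hc := aux_coco (f ω) L hL (gradf ω) (hconv ω) (hgrad ω) (hlip ω) vk wstar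
    set a := gradf ω wt - gradf ω wstar with hadef
    set c := gradf ω vk - gradf ω wstar with hcdef
    have e : g ω = (a - (c - G)) + bt := by rw [hg, hadef, hcdef]; abel
    rw [← inner_sub_left, ← hcdef, e]
    have p1 := parallelogram_law_with_norm ℝ (a - (c - G)) bt
    have p2 := parallelogram_law_with_norm ℝ a (c - G)
    have p3 := norm_sub_sq_real c G
    nlinarith [sq_nonneg ‖a - (c - G) - bt‖, sq_nonneg ‖a + (c - G)‖]
  have i1 := (hB wt).const_mul (8 * L)
  have i2 := (hB vk).const_mul (8 * L)
  have i3 := hC.const_mul (-8)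
  have i12 := i1.add i2
  have i123 := i12.add i3
  have h := integral_mono (μ := μ) hint
    (i123.add (integrable_const (4 * ‖G‖ ^ 2 + 2 * ‖bt‖ ^ 2))) hpt
  rw [integral_add' i123 (integrable_const _), integral_add' i12 i3, integral_add' i1 i2,
    integral_const_mul, integral_const_mul, integral_const_mul, hBE, hBE, hCE] at h
  simp only [integral_const, probReal_univ, one_smul] at h
  nlinarith [sq_nonneg ‖G‖]
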